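/- Let α ∈ (2,3), n ≥ 2, and let γ ∈ H^{(α+1)/2,2}(ℝ/ℤ,ℝⁿ) be injective and parametrized by arc-length. Then for every ε > 0 there exists a constant C < ∞ such that |R(γ,h)| ≤ C·‖h‖_{H^{3/2+ε,2}} for all h ∈ H^{3/2+ε,2}(ℝ/ℤ,ℝⁿ); i.e. h ↦ R(γ,h) extends to a bounded linear functional on H^{3/2+ε,2}(ℝ/ℤ,ℝⁿ). -/

import Mathlib

open MeasureTheory Filter Set
open scoped RealInnerProductSpace ENNReal Topology

noncomputable section

/-- `ℝⁿ` -/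
abbrev Rn (n : ℕ) := EuclideanSpace ℝ (Fin n)

variable {n : ℕ}

/-- A 1-periodic curve is injective as a map on `ℝ/ℤ`. -/
def PerInjective (γ : ℝ → Rn n) : Prop :=
  ∀ u v : ℝ, γ u = γ v → ∃ k : ℤ, v = u + k

/-- `γ` is a regular curve: `γ'(u) ≠ 0` for all `u`. -/
def RegularCurve (γ : ℝ → Rn n) : Prop := ∀ u : ℝ, deriv γ u ≠ 0

/-- `γ` is parametrized by arc-length: `|γ'(u)| = 1` for all `u`. -/
def ArcLengthParam (γ : ℝ → Rn n) : Prop := ∀ u : ℝ, ‖deriv γ u‖ = 1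

/-- The length `L(γ) = ∫₀¹ |γ'(θ)| dθ` of the closed curve `γ`. -/
def curveLen (γ : ℝ → Rn n) : ℝ := ∫ θ in (0:ℝ)..1, ‖deriv γ θ‖

/-- The arc length `L(γ|_{[u,u+w]}) = |∫_u^{u+w} |γ'(θ)| dθ|`. -/
def arcLen (γ : ℝ → Rn n) (u w : ℝ) : ℝ := |∫ θ in u..(u + w), ‖deriv γ θ‖|

/-- The intrinsic distance `d_γ(u+w,u)`. -/
def idist (γ : ℝ → Rn n) (u w : ℝ) : ℝ :=
  min (arcLen γ u w) (curveLen γ - arcLen γ u w)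

/-- The integrand of the O'Hara energy `E^α`. -/
def ohIntegrand (α : ℝ) (γ : ℝ → Rn n) (u w : ℝ) : ℝ :=
  (1 / ‖γ (u + w) - γ u‖ ^ α - 1 / idist γ u w ^ α) * ‖deriv γ (u + w)‖ * ‖deriv γ u‖

/-- The O'Hara energy `E^α`, with values in `[0,∞]`. -/
def oharaE (α : ℝ) (γ : ℝ → Rn n) : ℝ≥0∞ :=
  ∫⁻ u in Ioc (0:ℝ) 1, ∫⁻ w in Ioo (-(1:ℝ)/2) (1/2), ENNReal.ofReal (ohIntegrand α γ u w)

/-- The O'Hara energy `E^α` as a real number. -/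
def oharaER (α : ℝ) (γ : ℝ → Rn n) : ℝ := (oharaE α γ).toReal

/-- `[−1/2,−ε] ∪ [ε,1/2]`, the `w`-section of `U_ε`. -/
def Wset (ε : ℝ) : Set ℝ := Icc (-(1:ℝ)/2) (-ε) ∪ Icc ε (1/2)

/-- The truncated O'Hara energy `E^α_ε`, an integral over `U_ε`. -/
def oharaEeps (α ε : ℝ) (γ : ℝ → Rn n) : ℝ :=
  ∫ u in Ioc (0:ℝ) 1, ∫ w in Wset ε, ohIntegrand α γ u w

/-- `F` has directional (Gâteaux) derivative `d` at `γ` in direction `h`. -/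
def HasDirDeriv (F : (ℝ → Rn n) → ℝ) (γ h : ℝ → Rn n) (d : ℝ) : Prop :=
  Tendsto (fun τ : ℝ => (F (γ + τ • h) - F γ) / τ) (𝓝[≠] (0:ℝ)) (𝓝 d)

/-- Squared Gagliardo seminorm `[f]²_{H^{s,2}}` of a 1-periodic map. -/
def gagliardoSq (s : ℝ) {E : Type*} [NormedAddCommGroup E] (f : ℝ → E) : ℝ≥0∞ :=
  ∫⁻ u in Ioc (0:ℝ) 1, ∫⁻ w in Ioo (-(1:ℝ)/2) (1/2),
    ENNReal.ofReal (‖f (u + w) - f u‖ ^ 2 / |w| ^ (1 + 2 * s))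

/-- Membership in the fractional Sobolev space `H^{1+σ,2}(ℝ/ℤ,ℝⁿ)`, `σ ∈ (0,1)`:
a 1-periodic `C¹` function whose derivative has finite Gagliardo seminorm of order `σ`. -/
def MemH1 (σ : ℝ) (γ : ℝ → Rn n) : Prop :=
  Function.Periodic γ 1 ∧ ContDiff ℝ 1 γ ∧ gagliardoSq σ (deriv γ) < ⊤

/-- The norm of `H^{1+σ,2}(ℝ/ℤ,ℝⁿ)`. -/
def H1Norm (σ : ℝ) (γ : ℝ → Rn n) : ℝ :=
  Real.sqrt (∫ u in Ioc (0:ℝ) 1, (‖γ u‖ ^ 2 + ‖deriv γ u‖ ^ 2)) +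
    Real.sqrt ((gagliardoSq σ (deriv γ)).toReal)

/-- Membership of a 1-periodic map in `L²(ℝ/ℤ)`. -/
def MemL2per {E : Type*} [NormedAddCommGroup E] (f : ℝ → E) : Prop :=
  Function.Periodic f 1 ∧ AEStronglyMeasurable f (volume : Measure ℝ) ∧
    IntegrableOn (fun u => ‖f u‖ ^ 2) (Ioc (0:ℝ) 1) volume

/-- Membership in the fractional Sobolev space `H^{s,2}(ℝ/ℤ)`, `s ∈ (0,1)`. -/
def MemHs0 (s : ℝ) {E : Type*} [NormedAddCommGroup E] (f : ℝ → E) : Prop :=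
  MemL2per f ∧ gagliardoSq s f < ⊤

/-- The norm of `H^{s,2}(ℝ/ℤ)` for `s ∈ (0,1)`: `‖f‖_{L²} + [f]_{H^{s,2}}`. -/
def Hs0Norm (s : ℝ) {E : Type*} [NormedAddCommGroup E] (f : ℝ → E) : ℝ :=
  Real.sqrt (∫ u in Ioc (0:ℝ) 1, ‖f u‖ ^ 2) + Real.sqrt ((gagliardoSq s f).toReal)

/-- The `k`-th Fourier coefficient (`j`-th component) of a 1-periodic curve. -/
def fCoef (γ : ℝ → Rn n) (k : ℤ) (j : Fin n) : ℂ :=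
  ∫ u in (0:ℝ)..1, (γ u j : ℂ) * Complex.exp ((-2) * (Real.pi : ℂ) * Complex.I * (k : ℂ) * (u : ℂ))

/-- Membership in `H^{s,2}(ℝ/ℤ,ℝⁿ)` via the Fourier characterization:
`((1+|k|²)^{s/2} γ̂(k))_k ∈ ℓ²`. -/
def MemHF (s : ℝ) (γ : ℝ → Rn n) : Prop :=
  Function.Periodic γ 1 ∧ Continuous γ ∧
    Summable (fun k : ℤ => (1 + (k : ℝ) ^ 2) ^ s * ∑ j, ‖fCoef γ k j‖ ^ 2)

/-- The squared Fourier norm of `H^{s,2}(ℝ/ℤ,ℝⁿ)`. -/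
def fNormSq (s : ℝ) (γ : ℝ → Rn n) : ℝ :=
  ∑' k : ℤ, (1 + (k : ℝ) ^ 2) ^ s * ∑ j, ‖fCoef γ k j‖ ^ 2

/-- C¹-norm of a 1-periodic map. -/
def c1Norm (f : ℝ → Rn n) : ℝ := ⨆ u : Icc (0:ℝ) 1, (‖f u.1‖ + ‖deriv f u.1‖)

/-- The integrand of `Q(γ,h)`. -/
def Qintegrand (α : ℝ) (γ h : ℝ → Rn n) (u w : ℝ) : ℝ :=
  ⟪deriv γ u, deriv h u⟫ / |w| ^ α
    - ⟪γ (u + w) - γ u, h (u + w) - h u⟫ / |w| ^ (α + 2)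

/-- The integrand of `R(γ,h)`. -/
def Rintegrand (α : ℝ) (γ h : ℝ → Rn n) (u w : ℝ) : ℝ :=
  2 * ⟪deriv γ u, deriv h u⟫ * (1 / ‖γ (u + w) - γ u‖ ^ α - 1 / |w| ^ α)
    - α * ⟪γ (u + w) - γ u, h (u + w) - h u⟫ *
        (1 / ‖γ (u + w) - γ u‖ ^ (α + 2) - 1 / |w| ^ (α + 2))

/-- `R(γ,h)`, an absolutely convergent double integral over `(ℝ/ℤ) × [−1/2,1/2]`. -/
def Rval (α : ℝ) (γ h : ℝ → Rn n) : ℝ :=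
  ∫ p in (Ioc (0:ℝ) 1) ×ˢ (Icc (-(1:ℝ)/2) (1/2)), Rintegrand α γ h p.1 p.2

/-!
Write `γ(u + w) - γ(u) = w • m`, where `m` is the mean of `γ'` over the segment from `u` to `u + w`.
Since `|γ'| = 1`, the defect `1 - |m|²` is the variance of `γ'` on that segment, so it is at most
the mean of `|γ'(u + s w) - γ'(u)|²` over `s ∈ (0, 1)`; by scaling in `w`, the integral of
`(1 - |m|²) / |w|^α` is therefore at most the squared Gagliardo seminorm of `γ'` of order
`(α - 1) / 2`. Injectivity bounds `|m|` from below, and then both differences of powers in the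
integrand of `R(γ, h)` are controlled by the defect, which gives `|R(γ, h)| ≤ C sup |h'|`.
Finally `sup |h'|` is bounded by the Sobolev embedding `H^{1/2 + ε, 2}(ℝ/ℤ) ⊂ L^∞`: the
`r`-derivative of the mean of `f` over `(0, r)` is a mean of differences of `f`, whose integral
over `r` is estimated by Cauchy–Schwarz.
-/

section Scaling

theorem setLIntegral_comp_mul_left_le {s : ℝ} (hs : 0 < s) {A : Set ℝ}
    (hsA : MapsTo (s * ·) A A) (g : ℝ → ℝ≥0∞) :
    ∫⁻ x in A, g (s * x) ≤ ENNReal.ofReal s⁻¹ * ∫⁻ x in A, g x := by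
  have hemb : MeasurableEmbedding (s * · : ℝ → ℝ) := measurableEmbedding_mulLeft₀ hs.ne'
  calc ∫⁻ x in A, g (s * x)
      ≤ ∫⁻ x in (s * ·) ⁻¹' A, g (s * x) := lintegral_mono_set hsA
    _ = ∫⁻ y in A, g y ∂(volume.map (s * ·)) := by
        rw [hemb.restrict_map, hemb.lintegral_map]
    _ = ENNReal.ofReal s⁻¹ * ∫⁻ x in A, g x := by
        rw [Real.map_volume_mul_left hs.ne', Measure.restrict_smul, lintegral_smul_measure,
          smul_eq_mul, abs_of_pos (inv_pos.2 hs)]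

theorem setLIntegral_comp_mul_left_div_rpow_le {α s : ℝ} (hα : 1 ≤ α) (hs : s ∈ Ioc (0 : ℝ) 1)
    {A : Set ℝ} (hsA : MapsTo (s * ·) A A) (F : ℝ → ℝ) :
    ∫⁻ w in A, ENNReal.ofReal (F (s * w) / |w| ^ α) ≤
      ∫⁻ w in A, ENNReal.ofReal (F w / |w| ^ α) := by
  obtain ⟨hs0, hs1⟩ := hs
  have hsα : 0 < s ^ α := Real.rpow_pos_of_pos hs0 α
  have hscale (w : ℝ) : ENNReal.ofReal (F (s * w) / |w| ^ α) =
      ENNReal.ofReal (s ^ α) * ENNReal.ofReal (F (s * w) / |s * w| ^ α) := by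
    rw [← ENNReal.ofReal_mul hsα.le, abs_mul, abs_of_pos hs0,
      Real.mul_rpow hs0.le (abs_nonneg w), ← mul_div_assoc, mul_div_mul_left _ _ hsα.ne']
  have hle : ENNReal.ofReal (s ^ α) * ENNReal.ofReal s⁻¹ ≤ 1 := by
    rw [← ENNReal.ofReal_mul hsα.le, ENNReal.ofReal_le_one, ← div_eq_mul_inv, div_le_one hs0]
    simpa using Real.rpow_le_rpow_of_exponent_ge hs0 hs1 hα
  calc ∫⁻ w in A, ENNReal.ofReal (F (s * w) / |w| ^ α)
      = ENNReal.ofReal (s ^ α) * ∫⁻ w in A, ENNReal.ofReal (F (s * w) / |s * w| ^ α) := by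
        simp_rw [hscale, lintegral_const_mul' _ _ ENNReal.ofReal_ne_top]
    _ ≤ ENNReal.ofReal (s ^ α) *
          (ENNReal.ofReal s⁻¹ * ∫⁻ w in A, ENNReal.ofReal (F w / |w| ^ α)) := by
        gcongr
        exact setLIntegral_comp_mul_left_le hs0 hsA fun x => ENNReal.ofReal (F x / |x| ^ α)
    _ ≤ ∫⁻ w in A, ENNReal.ofReal (F w / |w| ^ α) := by
        rw [← mul_assoc]
        exact mul_le_of_le_one_left' hle

end Scaling

section Variance

variable {Ω H : Type*} [MeasurableSpace Ω] {μ : Measure Ω} [IsProbabilityMeasure μ]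
  [NormedAddCommGroup H] [InnerProductSpace ℝ H] [CompleteSpace H]

theorem integral_norm_sq_sub_norm_integral_sq_le {X : Ω → H} (hX : MemLp X 2 μ) (e : H) :
    ∫ ω, ‖X ω‖ ^ 2 ∂μ - ‖∫ ω, X ω ∂μ‖ ^ 2 ≤ ∫ ω, ‖X ω - e‖ ^ 2 ∂μ := by
  have hXint : Integrable X μ := hX.integrable one_le_two
  have hinner : ∫ ω, ⟪X ω, e⟫ ∂μ = ⟪∫ ω, X ω ∂μ, e⟫ := by
    simp_rw [real_inner_comm e]
    exact integral_inner hXint e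
  have hexpand : ∫ ω, ‖X ω - e‖ ^ 2 ∂μ =
      ∫ ω, ‖X ω‖ ^ 2 ∂μ - 2 * ⟪∫ ω, X ω ∂μ, e⟫ + ‖e‖ ^ 2 := by
    have hsq : Integrable (fun ω => ‖X ω‖ ^ 2) μ := hX.integrable_norm_pow two_ne_zero
    have hcross : Integrable (fun ω => 2 * ⟪X ω, e⟫) μ := (hXint.inner_const e).const_mul 2
    simp_rw [norm_sub_sq_real]
    rw [integral_add (f := fun ω => ‖X ω‖ ^ 2 - 2 * ⟪X ω, e⟫) (hsq.sub hcross)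
      (integrable_const _), integral_sub hsq hcross, integral_const_mul, hinner]
    simp
  have hnonneg := sq_nonneg ‖∫ ω, X ω ∂μ - e‖
  rw [norm_sub_sq_real] at hnonneg
  linarith

end Variance

section SegmentAverage

variable {E : Type*} [NormedAddCommGroup E] [NormedSpace ℝ E]

/-- The average of `f` over the segment from `u` to `u + w`.  It is parametrized over `[0, 1]`
rather than written as `⨍ x in u..(u + w), f x`, so that it is continuous up to `w = 0`, where it
takes the value `f u`. -/
def segAvg (f : ℝ → E) (u w : ℝ) : E := ∫ s in (0 : ℝ)..1, f (u + s * w)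

theorem continuous_segAvg {f : ℝ → E} (hf : Continuous f) :
    Continuous fun p : ℝ × ℝ => segAvg f p.1 p.2 :=
  intervalIntegral.continuous_parametric_intervalIntegral_of_continuous'
    (f := fun (p : ℝ × ℝ) s => f (p.1 + s * p.2)) (by fun_prop) 0 1

theorem norm_segAvg_le {f : ℝ → E} {C : ℝ} (hf : ∀ x, ‖f x‖ ≤ C) (u w : ℝ) :
    ‖segAvg f u w‖ ≤ C := by
  simpa [segAvg] using intervalIntegral.norm_integral_le_of_norm_le_const (a := (0 : ℝ)) (b := 1)
    (f := fun s => f (u + s * w)) fun s _ => hf _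

theorem segAvg_zero_right [CompleteSpace E] (f : ℝ → E) (u : ℝ) : segAvg f u 0 = f u := by
  simp [segAvg]

theorem smul_segAvg_deriv [CompleteSpace E] {γ : ℝ → E} (hγ : ContDiff ℝ 1 γ) (u w : ℝ) :
    w • segAvg (deriv γ) u w = γ (u + w) - γ u := by
  have hsub := intervalIntegral.smul_integral_comp_add_mul (a := 0) (b := 1) (deriv γ) w u
  rw [intervalIntegral.integral_deriv_eq_sub (fun x _ => hγ.differentiable one_ne_zero x)
    ((hγ.continuous_deriv le_rfl).intervalIntegrable _ _)] at hsub
  simpa [segAvg, mul_comm] using hsub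

variable {H : Type*} [NormedAddCommGroup H] [InnerProductSpace ℝ H] [CompleteSpace H]

theorem one_sub_norm_segAvg_sq_le {f : ℝ → H} (hf : Continuous f) (hf1 : ∀ u, ‖f u‖ = 1)
    (u w : ℝ) :
    1 - ‖segAvg f u w‖ ^ 2 ≤ ∫ s in Ioc (0 : ℝ) 1, ‖f (u + s * w) - f u‖ ^ 2 := by
  have : IsProbabilityMeasure (volume.restrict (Ioc (0 : ℝ) 1)) := ⟨by simp⟩
  have hmeas : AEStronglyMeasurable (fun s => f (u + s * w)) (volume.restrict (Ioc 0 1)) :=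
    Continuous.aestronglyMeasurable (by fun_prop)
  have hLp : MemLp (fun s => f (u + s * w)) 2 (volume.restrict (Ioc 0 1)) :=
    MemLp.of_bound hmeas 1 (Eventually.of_forall fun s => (hf1 _).le)
  simpa [hf1, segAvg, intervalIntegral.integral_of_le] using
    integral_norm_sq_sub_norm_integral_sq_le hLp (f u)

theorem lintegral_one_sub_norm_segAvg_sq_le_gagliardoSq {α : ℝ} (hα : 1 ≤ α) {f : ℝ → H}
    (hf : Continuous f) (hf1 : ∀ u, ‖f u‖ = 1) :
    ∫⁻ u in Ioc (0 : ℝ) 1, ∫⁻ w in Ioo (-(1 : ℝ) / 2) (1 / 2),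
      ENNReal.ofReal ((1 - ‖segAvg f u w‖ ^ 2) / |w| ^ α) ≤ gagliardoSq ((α - 1) / 2) f := by
  rw [gagliardoSq, show 1 + 2 * ((α - 1) / 2) = α by ring]
  refine lintegral_mono fun u => ?_
  have hscale (s : ℝ) (hs : s ∈ Ioc (0 : ℝ) 1) :
      MapsTo (s * ·) (Ioo (-(1 : ℝ) / 2) (1 / 2)) (Ioo (-(1 : ℝ) / 2) (1 / 2)) := fun w hw =>
    ⟨by nlinarith [hs.1, hs.2, hw.1, hw.2], by nlinarith [hs.1, hs.2, hw.1, hw.2]⟩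
  calc ∫⁻ w in Ioo (-(1 : ℝ) / 2) (1 / 2), ENNReal.ofReal ((1 - ‖segAvg f u w‖ ^ 2) / |w| ^ α)
      ≤ ∫⁻ w in Ioo (-(1 : ℝ) / 2) (1 / 2), ∫⁻ s in Ioc (0 : ℝ) 1,
          ENNReal.ofReal (‖f (u + s * w) - f u‖ ^ 2 / |w| ^ α) := by
        refine lintegral_mono fun w => ?_
        have hint : IntegrableOn (fun s => ‖f (u + s * w) - f u‖ ^ 2 / |w| ^ α) (Ioc 0 1) :=
          (Continuous.integrableOn_Icc (by fun_prop)).mono_set Ioc_subset_Icc_self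
        rw [← ofReal_integral_eq_lintegral_ofReal hint
          (Eventually.of_forall fun s => by positivity), integral_div]
        gcongr
        exact one_sub_norm_segAvg_sq_le hf hf1 u w
    _ = ∫⁻ s in Ioc (0 : ℝ) 1, ∫⁻ w in Ioo (-(1 : ℝ) / 2) (1 / 2),
          ENNReal.ofReal (‖f (u + s * w) - f u‖ ^ 2 / |w| ^ α) := by
        have hnum : Measurable fun p : ℝ × ℝ => ‖f (u + p.2 * p.1) - f u‖ :=
          Continuous.measurable (by fun_prop)
        exact lintegral_lintegral_swap (Measurable.aemeasurable (by fun_prop))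
    _ ≤ ∫⁻ _s in Ioc (0 : ℝ) 1, ∫⁻ w in Ioo (-(1 : ℝ) / 2) (1 / 2),
          ENNReal.ofReal (‖f (u + w) - f u‖ ^ 2 / |w| ^ α) :=
        setLIntegral_mono' measurableSet_Ioc fun s hs =>
          setLIntegral_comp_mul_left_div_rpow_le hα hs (hscale s hs) fun x => ‖f (u + x) - f u‖ ^ 2
    _ = ∫⁻ w in Ioo (-(1 : ℝ) / 2) (1 / 2),
          ENNReal.ofReal (‖f (u + w) - f u‖ ^ 2 / |w| ^ α) := by simp

end SegmentAverage

section ChordArc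

theorem segAvg_deriv_ne_zero {γ : ℝ → Rn n} (hγ : ContDiff ℝ 1 γ) (hinj : PerInjective γ)
    (harc : ArcLengthParam γ) (u : ℝ) {w : ℝ} (hw : |w| < 1) : segAvg (deriv γ) u w ≠ 0 := by
  intro hzero
  have hclosed : γ (u + w) = γ u := by
    rw [← sub_eq_zero, ← smul_segAvg_deriv hγ, hzero, smul_zero]
  obtain ⟨k, hk⟩ := hinj _ _ hclosed.symm
  obtain rfl : w = k := by linarith
  obtain rfl : k = 0 := Int.abs_lt_one_iff.1 (by exact_mod_cast hw)
  rw [Int.cast_zero, segAvg_zero_right] at hzero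
  simpa [hzero] using harc u

theorem exists_pos_le_norm_segAvg_deriv {γ : ℝ → Rn n} (hγ : ContDiff ℝ 1 γ)
    (hinj : PerInjective γ) (harc : ArcLengthParam γ) :
    ∃ c > 0, ∀ u ∈ Icc (0 : ℝ) 1, ∀ w ∈ Icc (-(1 : ℝ) / 2) (1 / 2),
      c ≤ ‖segAvg (deriv γ) u w‖ := by
  have hcompact : IsCompact (Icc (0 : ℝ) 1 ×ˢ Icc (-(1 : ℝ) / 2) (1 / 2)) :=
    isCompact_Icc.prod isCompact_Icc
  obtain ⟨c, hc, hle⟩ := hcompact.exists_forall_le' (a := 0)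
    (continuous_segAvg (hγ.continuous_deriv le_rfl)).norm.continuousOn fun p hp =>
      norm_pos_iff.2 <| segAvg_deriv_ne_zero hγ hinj harc p.1 <|
        abs_lt.2 ⟨by linarith [hp.2.1], by linarith [hp.2.2]⟩
  exact ⟨c, hc, fun u hu w hw => hle (u, w) ⟨hu, hw⟩⟩

end ChordArc

section PowerDifferences

theorem one_div_rpow_sub_one_le {x β : ℝ} (hx : 0 < x) (hβ : 0 ≤ β) :
    1 / x ^ β - 1 ≤ β / (2 * x ^ (β + 2)) * (1 - x ^ 2) := by
  have : 0 < x ^ β := Real.rpow_pos_of_pos hx β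
  have hpow : 1 - x ^ β ≤ -(β * Real.log x) := by
    have := Real.add_one_le_exp (Real.log x * β)
    rw [← Real.rpow_def_of_pos hx] at this
    linarith
  have hlog : -(2 * Real.log x) ≤ (x ^ 2)⁻¹ - 1 := by
    have := Real.log_le_sub_one_of_pos (inv_pos.2 (pow_pos hx 2))
    rw [Real.log_inv, Real.log_pow] at this
    exact_mod_cast this
  calc 1 / x ^ β - 1 = (1 - x ^ β) / x ^ β := by field_simp
    _ ≤ β / 2 * ((x ^ 2)⁻¹ - 1) / x ^ β := by
        gcongr
        linarith [mul_le_mul_of_nonneg_left hlog (div_nonneg hβ zero_le_two)]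
    _ = β / (2 * x ^ (β + 2)) * (1 - x ^ 2) := by
        rw [Real.rpow_add hx, Real.rpow_two]
        field_simp

theorem abs_one_div_mul_rpow_sub_one_div_rpow_le {r x c β : ℝ} (hr : 0 ≤ r) (hc : 0 < c)
    (hcx : c ≤ x) (hx1 : x ≤ 1) (hβ : 0 ≤ β) :
    |1 / (r * x) ^ β - 1 / r ^ β| ≤ β / (2 * c ^ (β + 2)) * ((1 - x ^ 2) / r ^ β) := by
  have hx : 0 < x := hc.trans_le hcx
  have hdefect : 0 ≤ 1 - x ^ 2 := sub_nonneg.2 (pow_le_one₀ hx.le hx1)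
  have hnonneg : 0 ≤ 1 / x ^ β - 1 :=
    sub_nonneg.2 (one_le_one_div (Real.rpow_pos_of_pos hx β) (Real.rpow_le_one hx.le hx1 hβ))
  calc |1 / (r * x) ^ β - 1 / r ^ β| = (1 / x ^ β - 1) / r ^ β := by
        rw [Real.mul_rpow hr hx.le, ← abs_of_nonneg (div_nonneg hnonneg (Real.rpow_nonneg hr β))]
        congr 1
        rw [mul_comm, ← div_div, ← sub_div]
    _ ≤ β / (2 * x ^ (β + 2)) * (1 - x ^ 2) / r ^ β := by
        gcongr
        exact one_div_rpow_sub_one_le hx hβ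
    _ ≤ β / (2 * c ^ (β + 2)) * (1 - x ^ 2) / r ^ β := by gcongr
    _ = β / (2 * c ^ (β + 2)) * ((1 - x ^ 2) / r ^ β) := mul_div_assoc _ _ _

theorem sq_mul_div_rpow_add_two {r : ℝ} (hr : 0 ≤ r) (d : ℝ) {β : ℝ} (hβ : β ≠ 0) :
    r ^ 2 * (d / r ^ (β + 2)) = d / r ^ β := by
  rcases hr.eq_or_lt' with rfl | hr
  · simp [Real.zero_rpow hβ]
  · rw [Real.rpow_add hr, Real.rpow_two]
    field_simp

end PowerDifferences

section SobolevEmbedding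

variable {E : Type*} [NormedAddCommGroup E]

theorem setLIntegral_Ioc_comp_add_right_of_periodic {F : ℝ → ℝ≥0∞} {T : ℝ} (hT : 0 < T)
    (hF : Function.Periodic F T) (c : ℝ) :
    ∫⁻ u in Ioc 0 T, F (u + c) = ∫⁻ u in Ioc 0 T, F u := by
  have hpre : (· + c) ⁻¹' Ioc c (c + T) = Ioc 0 T := by
    rw [preimage_add_const_Ioc, sub_self, add_sub_cancel_left]
  calc ∫⁻ u in Ioc 0 T, F (u + c) = ∫⁻ u in Ioc c (c + T), F u := by
        rw [← hpre]
        exact (measurePreserving_add_right volume c).setLIntegral_comp_preimage_emb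
          (measurableEmbedding_addRight c) F _
    _ = ∫⁻ u in Ioc 0 (0 + T), F u :=
        (isAddFundamentalDomain_Ioc hT c).setLIntegral_eq (isAddFundamentalDomain_Ioc hT 0) F
          hF.map_vadd_zmultiples
    _ = ∫⁻ u in Ioc 0 T, F u := by rw [zero_add]

theorem gagliardoSq_comp_add_right {s : ℝ} {f : ℝ → E} (hper : Function.Periodic f 1) (c : ℝ) :
    gagliardoSq s (fun x => f (x + c)) = gagliardoSq s f := by
  have hinner : Function.Periodic (fun u => ∫⁻ w in Ioo (-(1 : ℝ) / 2) (1 / 2),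
      ENNReal.ofReal (‖f (u + w) - f u‖ ^ 2 / |w| ^ (1 + 2 * s))) 1 := fun u => by
    simp only [add_right_comm u 1, hper _]
  simp only [gagliardoSq, add_right_comm _ _ c]
  exact setLIntegral_Ioc_comp_add_right_of_periodic one_pos hinner c

theorem Hs0Norm_comp_add_right {s : ℝ} {f : ℝ → E} (hper : Function.Periodic f 1) (c : ℝ) :
    Hs0Norm s (fun x => f (x + c)) = Hs0Norm s f := by
  have hL2 : ∫ u in Ioc (0 : ℝ) 1, ‖f (u + c)‖ ^ 2 = ∫ u in Ioc (0 : ℝ) 1, ‖f u‖ ^ 2 := by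
    have hper_sq : Function.Periodic (fun u => ‖f u‖ ^ 2) 1 := fun u => by simp only [hper u]
    simp_rw [← intervalIntegral.integral_of_le zero_le_one]
    rw [intervalIntegral.integral_comp_add_right (fun u => ‖f u‖ ^ 2), zero_add, add_comm 1 c,
      hper_sq.intervalIntegral_add_eq c 0, zero_add]
  rw [Hs0Norm, Hs0Norm, hL2, gagliardoSq_comp_add_right hper]

variable [NormedSpace ℝ E]

theorem enorm_integral_sub_div_sq_le (f : ℝ → E) {r : ℝ} (hr : 0 < r) :
    ‖(r ^ 2)⁻¹ • ∫ w in (-r)..0, (f r - f (r + w))‖ₑ ≤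
      ∫⁻ w in Ioo (-r) 0, ENNReal.ofReal (‖f (r + w) - f r‖ / r ^ 2) := by
  rw [← intervalIntegral.integral_smul, intervalIntegral.integral_of_le (neg_nonpos.2 hr.le),
    integral_Ioc_eq_integral_Ioo]
  refine (enorm_integral_le_lintegral_enorm _).trans_eq (lintegral_congr fun w => ?_)
  rw [← ofReal_norm, norm_smul, norm_inv, Real.norm_of_nonneg (sq_nonneg r), inv_mul_eq_div,
    norm_sub_rev]

variable [CompleteSpace E]

theorem hasDerivAt_intervalAverage {f : ℝ → E} (hf : Continuous f) {r : ℝ} (hr : r ≠ 0) :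
    HasDerivAt (fun r => ⨍ x in (0 : ℝ)..r, f x)
      ((r ^ 2)⁻¹ • ∫ w in (-r)..0, (f r - f (r + w))) r := by
  have hprim : HasDerivAt (fun r => ∫ x in (0 : ℝ)..r, f x) (f r) r :=
    hf.integral_hasStrictDerivAt 0 r |>.hasDerivAt
  have hshift : ∫ w in (-r)..0, (f r - f (r + w)) = r • f r - ∫ x in (0 : ℝ)..r, f x := by
    rw [intervalIntegral.integral_sub (by simp) (Continuous.intervalIntegrable (by fun_prop) _ _),
      intervalIntegral.integral_comp_add_left]
    simp
  simp_rw [interval_average_eq, sub_zero]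
  refine ((hasDerivAt_inv hr).smul hprim).congr_deriv ?_
  rw [hshift, smul_sub, smul_smul, neg_smul, ← sub_eq_add_neg]
  congr 2
  field_simp

theorem tendsto_intervalAverage_nhdsGT_zero {f : ℝ → E} (hf : Continuous f) :
    Tendsto (fun r => ⨍ x in (0 : ℝ)..r, f x) (𝓝[>] 0) (𝓝 (f 0)) := by
  have hprim : HasDerivAt (fun r => ∫ x in (0 : ℝ)..r, f x) (f 0) 0 :=
    hf.integral_hasStrictDerivAt 0 0 |>.hasDerivAt
  rw [hasDerivAt_iff_tendsto_slope_zero] at hprim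
  simpa [interval_average_eq] using hprim.mono_left (nhdsGT_le_nhdsNE 0)

theorem enorm_intervalAverage_sub_le {f : ℝ → E} (hf : Continuous f) {R : ℝ} (hR : 0 < R) :
    ‖(⨍ x in (0 : ℝ)..R, f x) - f 0‖ₑ ≤
      ∫⁻ r in Ioo 0 R, ∫⁻ w in Ioo (-r) 0, ENNReal.ofReal (‖f (r + w) - f r‖ / r ^ 2) := by
  refine le_of_tendsto
    (tendsto_const_nhds.sub (tendsto_intervalAverage_nhdsGT_zero hf)).enorm ?_
  filter_upwards [Ioo_mem_nhdsGT hR] with δ hδ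
  have hpos (r : ℝ) (hr : r ∈ uIcc δ R) : 0 < r := by
    rw [uIcc_of_le hδ.2.le] at hr
    exact hδ.1.trans_le hr.1
  have hderiv_cont : ContinuousOn (fun r => (r ^ 2)⁻¹ • ∫ w in (-r)..0, (f r - f (r + w)))
      (uIcc δ R) := by
    have hint : Continuous fun r => ∫ w in (-r)..0, (f r - f (r + w)) := by
      simp_rw [intervalIntegral.integral_symm 0]
      exact (intervalIntegral.continuous_parametric_intervalIntegral_of_continuous
        (f := fun r w => f r - f (r + w)) (by fun_prop) continuous_neg).neg
    exact .smul (.inv₀ (by fun_prop) fun r hr => (pow_pos (hpos r hr) 2).ne') hint.continuousOn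
  calc ‖(⨍ x in (0 : ℝ)..R, f x) - ⨍ x in (0 : ℝ)..δ, f x‖ₑ
      = ‖∫ r in Ioo δ R, (r ^ 2)⁻¹ • ∫ w in (-r)..0, (f r - f (r + w))‖ₑ := by
        rw [← intervalIntegral.integral_eq_sub_of_hasDerivAt
          (fun r hr => hasDerivAt_intervalAverage hf (hpos r hr).ne')
          hderiv_cont.intervalIntegrable, intervalIntegral.integral_of_le hδ.2.le,
          integral_Ioc_eq_integral_Ioo]
    _ ≤ ∫⁻ r in Ioo δ R, ‖(r ^ 2)⁻¹ • ∫ w in (-r)..0, (f r - f (r + w))‖ₑ :=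
        enorm_integral_le_lintegral_enorm _
    _ ≤ ∫⁻ r in Ioo 0 R, ‖(r ^ 2)⁻¹ • ∫ w in (-r)..0, (f r - f (r + w))‖ₑ :=
        lintegral_mono_set (Ioo_subset_Ioo_left hδ.1.le)
    _ ≤ _ := setLIntegral_mono' measurableSet_Ioo fun r hr => enorm_integral_sub_div_sq_le f hr.1

theorem lintegral_mul_le_sqrt_mul_sqrt {X : Type*} [MeasurableSpace X] {μ : Measure X}
    {f g : X → ℝ≥0∞} (hf : AEMeasurable f μ) (hg : AEMeasurable g μ) :
    ∫⁻ x, f x * g x ∂μ ≤ (∫⁻ x, f x ^ 2 ∂μ) ^ (1 / 2 : ℝ) * (∫⁻ x, g x ^ 2 ∂μ) ^ (1 / 2 : ℝ) := by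
  simpa using ENNReal.lintegral_mul_le_Lp_mul_Lq μ Real.HolderConjugate.two_two hf hg

theorem setLIntegral_ofReal_div_sq_le {s : ℝ} (hs : -1 / 2 ≤ s) {a : ℝ → ℝ} (ha : Measurable a)
    (ha0 : ∀ w, 0 ≤ a w) {r : ℝ} (hr : 0 < r) :
    ∫⁻ w in Ioo (-r) 0, ENNReal.ofReal (a w / r ^ 2) ≤
      (∫⁻ w in Ioo (-r) 0, ENNReal.ofReal (a w ^ 2 / |w| ^ (1 + 2 * s))) ^ (1 / 2 : ℝ) *
        ENNReal.ofReal (r ^ (s - 1)) := by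
  have hle : ∀ w ∈ Ioo (-r) 0, ENNReal.ofReal (a w / r ^ 2) ≤
      ENNReal.ofReal (a w / |w| ^ (s + 1 / 2)) * ENNReal.ofReal (r ^ (s - 3 / 2)) := fun w hw => by
    have hw_pos : 0 < |w| := abs_pos.2 hw.2.ne
    have hwr : |w| ≤ r := abs_le.2 ⟨hw.1.le, by linarith [hw.2]⟩
    rw [← ENNReal.ofReal_mul (div_nonneg (ha0 w) (Real.rpow_nonneg (abs_nonneg w) _))]
    refine ENNReal.ofReal_le_ofReal ?_
    calc a w / r ^ 2 = a w / r ^ (s + 1 / 2) * r ^ (s - 3 / 2) := by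
          rw [div_mul_eq_mul_div, mul_div_assoc, ← Real.rpow_sub hr,
            show s - 3 / 2 - (s + 1 / 2) = -(2 : ℕ) by push_cast; ring, Real.rpow_neg hr.le,
            Real.rpow_natCast, div_eq_mul_inv]
      _ ≤ a w / |w| ^ (s + 1 / 2) * r ^ (s - 3 / 2) := by
          have := ha0 w
          gcongr
          linarith
  have hsq (w : ℝ) : ENNReal.ofReal (a w / |w| ^ (s + 1 / 2)) ^ 2 =
      ENNReal.ofReal (a w ^ 2 / |w| ^ (1 + 2 * s)) := by
    rw [← ENNReal.ofReal_pow (div_nonneg (ha0 w) (Real.rpow_nonneg (abs_nonneg w) _)), div_pow,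
      ← Real.rpow_mul_natCast (abs_nonneg w)]
    ring_nf
  have hconst : (∫⁻ _w in Ioo (-r) 0, ENNReal.ofReal (r ^ (s - 3 / 2)) ^ 2) ^ (1 / 2 : ℝ) =
      ENNReal.ofReal (r ^ (s - 1)) := by
    rw [setLIntegral_const, Real.volume_Ioo, ← ENNReal.ofReal_pow (by positivity),
      ← ENNReal.ofReal_mul (by positivity), ENNReal.ofReal_rpow_of_nonneg
      (by rw [sub_neg_eq_add]; positivity) (by norm_num), ← Real.rpow_mul_natCast hr.le,
      zero_sub, neg_neg, ← Real.rpow_add_one hr.ne', ← Real.rpow_mul hr.le]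
    congr 2
    push_cast
    ring
  calc _ ≤ ∫⁻ w in Ioo (-r) 0,
        ENNReal.ofReal (a w / |w| ^ (s + 1 / 2)) * ENNReal.ofReal (r ^ (s - 3 / 2)) :=
        setLIntegral_mono' measurableSet_Ioo hle
    _ ≤ _ := lintegral_mul_le_sqrt_mul_sqrt (by fun_prop) aemeasurable_const
    _ = _ := by simp_rw [hsq, hconst]

theorem enorm_intervalAverage_sub_le_gagliardoSq {s : ℝ} (hs : -1 / 2 ≤ s) {f : ℝ → E}
    (hf : Continuous f) :
    ‖(⨍ x in (0 : ℝ)..(1 / 2), f x) - f 0‖ₑ ≤ gagliardoSq s f ^ (1 / 2 : ℝ) *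
      (∫⁻ r in Ioo (0 : ℝ) (1 / 2), ENNReal.ofReal (r ^ (2 * s - 2))) ^ (1 / 2 : ℝ) := by
  set J : ℝ → ℝ≥0∞ := fun r => ∫⁻ w in Ioo (-(1 : ℝ) / 2) (1 / 2),
    ENNReal.ofReal (‖f (r + w) - f r‖ ^ 2 / |w| ^ (1 + 2 * s))
  have hJ : Measurable J := by
    have hnum : Measurable fun p : ℝ × ℝ => ‖f (p.1 + p.2) - f p.1‖ :=
      Continuous.measurable (by fun_prop)
    exact Measurable.lintegral_prod_right' (f := fun p : ℝ × ℝ =>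
      ENNReal.ofReal (‖f (p.1 + p.2) - f p.1‖ ^ 2 / |p.2| ^ (1 + 2 * s))) (by fun_prop)
  have hinner : ∀ r ∈ Ioo (0 : ℝ) (1 / 2),
      ∫⁻ w in Ioo (-r) 0, ENNReal.ofReal (‖f (r + w) - f r‖ / r ^ 2) ≤
        J r ^ (1 / 2 : ℝ) * ENNReal.ofReal (r ^ (s - 1)) := fun r hr => by
    have hnum : Measurable fun w => ‖f (r + w) - f r‖ := Continuous.measurable (by fun_prop)
    refine (setLIntegral_ofReal_div_sq_le hs hnum (fun w => norm_nonneg _) hr.1).trans ?_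
    gcongr
    exact lintegral_mono_set (Ioo_subset_Ioo (by linarith [hr.2]) (by norm_num))
  have hJsq (r : ℝ) : (J r ^ (1 / 2 : ℝ)) ^ 2 = J r := by
    rw [← ENNReal.rpow_mul_natCast]
    norm_num
  have hrpow_sq : ∀ r ∈ Ioo (0 : ℝ) (1 / 2),
      ENNReal.ofReal (r ^ (s - 1)) ^ 2 = ENNReal.ofReal (r ^ (2 * s - 2)) := fun r hr => by
    rw [← ENNReal.ofReal_pow (Real.rpow_nonneg hr.1.le _), ← Real.rpow_mul_natCast hr.1.le]
    ring_nf
  calc ‖(⨍ x in (0 : ℝ)..(1 / 2), f x) - f 0‖ₑ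
      ≤ ∫⁻ r in Ioo (0 : ℝ) (1 / 2), J r ^ (1 / 2 : ℝ) * ENNReal.ofReal (r ^ (s - 1)) :=
        (enorm_intervalAverage_sub_le hf one_half_pos).trans
          (setLIntegral_mono' measurableSet_Ioo hinner)
    _ ≤ (∫⁻ r in Ioo (0 : ℝ) (1 / 2), J r) ^ (1 / 2 : ℝ) *
          (∫⁻ r in Ioo (0 : ℝ) (1 / 2), ENNReal.ofReal (r ^ (2 * s - 2))) ^ (1 / 2 : ℝ) := by
        rw [← setLIntegral_congr_fun measurableSet_Ioo hrpow_sq]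
        simpa only [hJsq] using lintegral_mul_le_sqrt_mul_sqrt
          (μ := volume.restrict (Ioo (0 : ℝ) (1 / 2))) (hJ.pow_const (1 / 2 : ℝ)).aemeasurable
          (g := fun r => ENNReal.ofReal (r ^ (s - 1))) (by fun_prop)
    _ ≤ _ := by
        gcongr
        exact lintegral_mono_set fun r hr => ⟨hr.1, by linarith [hr.2]⟩

theorem norm_intervalAverage_sq_le {f : ℝ → E} (hf : Continuous f) {R : ℝ} (hR : 0 < R) :
    ‖⨍ x in (0 : ℝ)..R, f x‖ ^ 2 ≤ R⁻¹ * ∫ x in Ioc 0 R, ‖f x‖ ^ 2 := by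
  have hconvex : ConvexOn ℝ univ fun x : E => ‖x‖ ^ 2 :=
    (convexOn_norm convex_univ).pow (fun _ _ => norm_nonneg _) 2
  have hf_int : IntegrableOn f (Ioc 0 R) := hf.integrableOn_Icc.mono_set Ioc_subset_Icc_self
  have hsq_int : IntegrableOn (fun x => ‖f x‖ ^ 2) (Ioc 0 R) :=
    (Continuous.integrableOn_Icc (by fun_prop)).mono_set Ioc_subset_Icc_self
  simpa [uIoc_of_le hR.le, setAverage_eq, hR.le] using
    hconvex.map_set_average_le (by fun_prop) isClosed_univ (by simp [hR]) (by simp) (by simp)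
      hf_int hsq_int

theorem norm_zero_le_mul_Hs0Norm {s : ℝ} (hs : 1 / 2 < s) {f : ℝ → E} (hf : Continuous f)
    (hG : gagliardoSq s f < ⊤) :
    ‖f 0‖ ≤ (√2 + √(∫⁻ r in Ioo (0 : ℝ) (1 / 2), ENNReal.ofReal (r ^ (2 * s - 2))).toReal) *
      Hs0Norm s f := by
  set K := ∫⁻ r in Ioo (0 : ℝ) (1 / 2), ENNReal.ofReal (r ^ (2 * s - 2))
  set L := √(∫ x in Ioc (0 : ℝ) 1, ‖f x‖ ^ 2)
  set G := √(gagliardoSq s f).toReal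
  have hK : K < ⊤ := Integrable.lintegral_lt_top <|
    (intervalIntegral.integrableOn_Ioo_rpow_iff one_half_pos).2 (by linarith)
  have hmean : ‖⨍ x in (0 : ℝ)..(1 / 2), f x‖ ≤ √2 * L := by
    rw [← Real.sqrt_mul zero_le_two]
    refine Real.le_sqrt_of_sq_le ((norm_intervalAverage_sq_le hf one_half_pos).trans ?_)
    rw [one_div, inv_inv]
    gcongr
    · exact Eventually.of_forall fun x => by positivity
    · exact (Continuous.integrableOn_Icc (by fun_prop)).mono_set Ioc_subset_Icc_self
    · norm_num
  have hosc : ‖(⨍ x in (0 : ℝ)..(1 / 2), f x) - f 0‖ ≤ √K.toReal * G := by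
    have hfin : gagliardoSq s f ^ (1 / 2 : ℝ) * K ^ (1 / 2 : ℝ) ≠ ⊤ :=
      ENNReal.mul_ne_top (ENNReal.rpow_ne_top_of_nonneg (by norm_num) hG.ne)
        (ENNReal.rpow_ne_top_of_nonneg (by norm_num) hK.ne)
    have hle := ENNReal.toReal_mono hfin
      (enorm_intervalAverage_sub_le_gagliardoSq (by linarith) hf)
    rwa [toReal_enorm, ENNReal.toReal_mul, ← ENNReal.toReal_rpow, ← ENNReal.toReal_rpow,
      ← Real.sqrt_eq_rpow, ← Real.sqrt_eq_rpow, mul_comm] at hle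
  calc ‖f 0‖ ≤ ‖⨍ x in (0 : ℝ)..(1 / 2), f x‖ + ‖(⨍ x in (0 : ℝ)..(1 / 2), f x) - f 0‖ :=
        norm_le_norm_add_norm_sub _ _
    _ ≤ √2 * L + √K.toReal * G := add_le_add hmean hosc
    _ ≤ √2 * (L + G) + √K.toReal * (L + G) := by
        gcongr
        · exact le_add_of_nonneg_right (Real.sqrt_nonneg _)
        · exact le_add_of_nonneg_left (Real.sqrt_nonneg _)
    _ = (√2 + √K.toReal) * (L + G) := (add_mul _ _ _).symm

theorem exists_norm_le_mul_Hs0Norm {s : ℝ} (hs : 1 / 2 < s) :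
    ∃ C ≥ 0, ∀ f : ℝ → E, Continuous f → Function.Periodic f 1 → gagliardoSq s f < ⊤ →
      ∀ u, ‖f u‖ ≤ C * Hs0Norm s f := by
  refine ⟨√2 + √(∫⁻ r in Ioo (0 : ℝ) (1 / 2), ENNReal.ofReal (r ^ (2 * s - 2))).toReal,
    by positivity, fun f hf hper hG u => ?_⟩
  have hbound := norm_zero_le_mul_Hs0Norm hs (f := fun x => f (x + u)) (by fun_prop)
    (by rwa [gagliardoSq_comp_add_right hper])
  rwa [zero_add, Hs0Norm_comp_add_right hper] at hbound

end SobolevEmbedding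

section SobolevNorm

theorem Hs0Norm_deriv_le_H1Norm (σ : ℝ) {h : ℝ → Rn n} (hh : ContDiff ℝ 1 h) :
    Hs0Norm σ (deriv h) ≤ H1Norm σ h := by
  have hhc : Continuous h := hh.continuous
  have : Continuous (deriv h) := hh.continuous_deriv le_rfl
  have hint {g : ℝ → ℝ} (hg : Continuous g) : IntegrableOn g (Ioc 0 1) :=
    hg.integrableOn_Icc.mono_set Ioc_subset_Icc_self
  unfold Hs0Norm H1Norm
  gcongr with u
  · exact hint (by fun_prop)
  · exact hint (by fun_prop)
  · exact measurableSet_Ioc.nullMeasurableSet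
  · exact le_add_of_nonneg_left (sq_nonneg ‖h u‖)

theorem exists_norm_deriv_le_mul_H1Norm (n : ℕ) {σ : ℝ} (hσ : 1 / 2 < σ) :
    ∃ C : ℝ, ∀ h : ℝ → Rn n, MemH1 σ h → ∀ u, ‖deriv h u‖ ≤ C * H1Norm σ h := by
  obtain ⟨C, hC, hsup⟩ := exists_norm_le_mul_Hs0Norm (E := Rn n) hσ
  refine ⟨C, fun h ⟨hper, hh, hG⟩ u => ?_⟩
  have hper_deriv : Function.Periodic (deriv h) 1 := fun x => by
    rw [← deriv_comp_add_const, funext hper]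
  calc ‖deriv h u‖ ≤ C * Hs0Norm σ (deriv h) :=
        hsup (deriv h) (hh.continuous_deriv le_rfl) hper_deriv hG u
    _ ≤ C * H1Norm σ h := by gcongr; exact Hs0Norm_deriv_le_H1Norm σ hh

end SobolevNorm

section Functional

variable {γ h : ℝ → Rn n}

theorem measurable_Rintegrand (α : ℝ) (hγ : ContDiff ℝ 1 γ) (hh : ContDiff ℝ 1 h) :
    Measurable fun p : ℝ × ℝ => Rintegrand α γ h p.1 p.2 := by
  have hγc : Continuous γ := hγ.continuous
  have hhc : Continuous h := hh.continuous
  have : Continuous (deriv γ) := hγ.continuous_deriv le_rfl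
  have : Continuous (deriv h) := hh.continuous_deriv le_rfl
  have : Measurable fun p : ℝ × ℝ => ⟪deriv γ p.1, deriv h p.1⟫ :=
    Continuous.measurable (by fun_prop)
  have : Measurable fun p : ℝ × ℝ =>
      ⟪γ (p.1 + p.2) - γ p.1, h (p.1 + p.2) - h p.1⟫ := Continuous.measurable (by fun_prop)
  have : Measurable fun p : ℝ × ℝ => ‖γ (p.1 + p.2) - γ p.1‖ :=
    Continuous.measurable (by fun_prop)
  unfold Rintegrand
  fun_prop

variable {α c M : ℝ}

theorem abs_inner_chord_le (hγ : ContDiff ℝ 1 γ) (harc : ArcLengthParam γ) (hh : ContDiff ℝ 1 h)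
    (hM : ∀ u, ‖deriv h u‖ ≤ M) (u w : ℝ) :
    |⟪γ (u + w) - γ u, h (u + w) - h u⟫| ≤ M * |w| ^ 2 := by
  rw [← smul_segAvg_deriv hγ, ← smul_segAvg_deriv hh]
  calc |⟪w • segAvg (deriv γ) u w, w • segAvg (deriv h) u w⟫|
      ≤ ‖w • segAvg (deriv γ) u w‖ * ‖w • segAvg (deriv h) u w‖ := abs_real_inner_le_norm _ _
    _ ≤ (|w| * 1) * (|w| * M) := by
        rw [norm_smul, norm_smul, Real.norm_eq_abs]
        gcongr
        · exact norm_segAvg_le (fun x => (harc x).le) u w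
        · exact norm_segAvg_le hM u w
    _ = M * |w| ^ 2 := by ring

theorem abs_Rintegrand_le (hα : 0 < α) (hc : 0 < c) (hγ : ContDiff ℝ 1 γ)
    (harc : ArcLengthParam γ) (hh : ContDiff ℝ 1 h) (hM : ∀ u, ‖deriv h u‖ ≤ M) {u w : ℝ}
    (hchord : c ≤ ‖segAvg (deriv γ) u w‖) :
    |Rintegrand α γ h u w| ≤ α * (α + 4) / (2 * c ^ (α + 4)) * M *
      ((1 - ‖segAvg (deriv γ) u w‖ ^ 2) / |w| ^ α) := by
  have hM0 : 0 ≤ M := (norm_nonneg _).trans (hM 0)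
  have hm1 : ‖segAvg (deriv γ) u w‖ ≤ 1 := norm_segAvg_le (fun x => (harc x).le) u w
  have hΔ : ‖γ (u + w) - γ u‖ = |w| * ‖segAvg (deriv γ) u w‖ := by
    rw [← smul_segAvg_deriv hγ, norm_smul, Real.norm_eq_abs]
  unfold Rintegrand
  rw [hΔ]
  set x := ‖segAvg (deriv γ) u w‖
  have hdefect : 0 ≤ 1 - x ^ 2 := sub_nonneg.2 (pow_le_one₀ (norm_nonneg _) hm1)
  have hpow {β : ℝ} (hβ : 0 ≤ β) : |1 / (|w| * x) ^ β - 1 / |w| ^ β| ≤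
      β / (2 * c ^ (β + 2)) * ((1 - x ^ 2) / |w| ^ β) :=
    abs_one_div_mul_rpow_sub_one_div_rpow_le (abs_nonneg w) hc hchord hm1 hβ
  have hderiv : |⟪deriv γ u, deriv h u⟫| ≤ M :=
    (abs_real_inner_le_norm _ _).trans (by simpa [harc u] using hM u)
  have hconst : c ^ (α + 4) ≤ c ^ (α + 2) :=
    Real.rpow_le_rpow_of_exponent_ge hc (hchord.trans hm1) (by linarith)
  set D := (1 - x ^ 2) / |w| ^ α
  have hcancel : |w| ^ 2 * ((1 - x ^ 2) / |w| ^ (α + 2)) = D :=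
    sq_mul_div_rpow_add_two (abs_nonneg w) (1 - x ^ 2) hα.ne'
  have : 0 ≤ D := by positivity
  calc _ ≤ 2 * M * (α / (2 * c ^ (α + 2)) * D) + α * (M * |w| ^ 2) *
        ((α + 2) / (2 * c ^ (α + 2 + 2)) * ((1 - x ^ 2) / |w| ^ (α + 2))) := by
        refine (abs_sub _ _).trans ?_
        rw [abs_mul, abs_mul, abs_mul, abs_mul, abs_two, abs_of_pos hα]
        gcongr
        · exact hpow hα.le
        · exact abs_inner_chord_le hγ harc hh hM u w
        · exact hpow (by linarith)
    _ = 2 * M * (α / (2 * c ^ (α + 2)) * D) + α * M * ((α + 2) / (2 * c ^ (α + 4)) * D) := by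
        rw [← hcancel, show α + 2 + 2 = α + 4 by ring]
        ring
    _ ≤ 2 * M * (α / (2 * c ^ (α + 4)) * D) + α * M * ((α + 2) / (2 * c ^ (α + 4)) * D) := by
        gcongr
    _ = α * (α + 4) / (2 * c ^ (α + 4)) * M * D := by ring

theorem lintegral_enorm_Rintegrand_le (hα : 1 ≤ α) (hc : 0 < c) (hγ : ContDiff ℝ 1 γ)
    (harc : ArcLengthParam γ) (hh : ContDiff ℝ 1 h) (hM : ∀ u, ‖deriv h u‖ ≤ M)
    (hchord : ∀ u ∈ Icc (0 : ℝ) 1, ∀ w ∈ Icc (-(1 : ℝ) / 2) (1 / 2),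
      c ≤ ‖segAvg (deriv γ) u w‖) :
    ∫⁻ p in Ioc (0 : ℝ) 1 ×ˢ Icc (-(1 : ℝ) / 2) (1 / 2), ‖Rintegrand α γ h p.1 p.2‖ₑ ≤
      ENNReal.ofReal (α * (α + 4) / (2 * c ^ (α + 4)) * M) *
        gagliardoSq ((α - 1) / 2) (deriv γ) := by
  have hM0 : 0 ≤ M := (norm_nonneg _).trans (hM 0)
  set K := α * (α + 4) / (2 * c ^ (α + 4)) * M
  have hK : 0 ≤ K := by positivity
  rw [Measure.volume_eq_prod, ← Measure.prod_restrict,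
    lintegral_prod _ (measurable_Rintegrand α hγ hh).enorm.aemeasurable]
  calc _ ≤ ∫⁻ u in Ioc (0 : ℝ) 1, ∫⁻ w in Icc (-(1 : ℝ) / 2) (1 / 2), ENNReal.ofReal K *
          ENNReal.ofReal ((1 - ‖segAvg (deriv γ) u w‖ ^ 2) / |w| ^ α) := by
        refine setLIntegral_mono' measurableSet_Ioc fun u hu =>
          setLIntegral_mono' measurableSet_Icc fun w hw => ?_
        rw [← ENNReal.ofReal_mul hK, Real.enorm_eq_ofReal_abs]
        exact ENNReal.ofReal_le_ofReal <| abs_Rintegrand_le (by linarith) hc hγ harc hh hM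
          (hchord u (Ioc_subset_Icc_self hu) w hw)
    _ = ENNReal.ofReal K * ∫⁻ u in Ioc (0 : ℝ) 1, ∫⁻ w in Ioo (-(1 : ℝ) / 2) (1 / 2),
          ENNReal.ofReal ((1 - ‖segAvg (deriv γ) u w‖ ^ 2) / |w| ^ α) := by
        simp_rw [lintegral_const_mul' _ _ ENNReal.ofReal_ne_top, restrict_Ioo_eq_restrict_Icc]
    _ ≤ _ := by
        gcongr
        exact lintegral_one_sub_norm_segAvg_sq_le_gagliardoSq hα (hγ.continuous_deriv le_rfl) harc

theorem exists_abs_Rval_le_mul_of_norm_deriv_le (hα : 1 ≤ α) (hγ : MemH1 ((α - 1) / 2) γ)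
    (hinj : PerInjective γ) (harc : ArcLengthParam γ) :
    ∃ C : ℝ, ∀ h : ℝ → Rn n, ContDiff ℝ 1 h → ∀ M, (∀ u, ‖deriv h u‖ ≤ M) →
      IntegrableOn (fun p : ℝ × ℝ => Rintegrand α γ h p.1 p.2)
        (Ioc (0 : ℝ) 1 ×ˢ Icc (-(1 : ℝ) / 2) (1 / 2)) ∧ |Rval α γ h| ≤ C * M := by
  obtain ⟨-, hγ, hG⟩ := hγ
  obtain ⟨c, hc, hchord⟩ := exists_pos_le_norm_segAvg_deriv hγ hinj harc
  have hK : 0 ≤ α * (α + 4) / (2 * c ^ (α + 4)) := by positivity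
  refine ⟨α * (α + 4) / (2 * c ^ (α + 4)) * (gagliardoSq ((α - 1) / 2) (deriv γ)).toReal,
    fun h hh M hM => ?_⟩
  have hM0 : 0 ≤ M := (norm_nonneg _).trans (hM 0)
  have hbound := lintegral_enorm_Rintegrand_le hα hc hγ harc hh hM hchord
  have hfin := ENNReal.mul_ne_top
    (ENNReal.ofReal_ne_top (r := α * (α + 4) / (2 * c ^ (α + 4)) * M)) hG.ne
  refine ⟨⟨(measurable_Rintegrand α hγ hh).aestronglyMeasurable, hbound.trans_lt hfin.lt_top⟩, ?_⟩
  have hle := ENNReal.toReal_mono hfin ((enorm_integral_le_lintegral_enorm _).trans hbound)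
  rw [toReal_enorm, ENNReal.toReal_mul, ENNReal.toReal_ofReal (mul_nonneg hK hM0)] at hle
  exact hle.trans_eq (by ring)

end Functional

theorem statement12_general {n : ℕ} {α : ℝ} (hα : 1 ≤ α)
    {γ : ℝ → Rn n} (hγ : MemH1 ((α - 1) / 2) γ) (hinj : PerInjective γ)
    (harc : ArcLengthParam γ) :
    ∀ ε > (0 : ℝ), ∃ C : ℝ,
      ∀ h : ℝ → Rn n, MemH1 (1 / 2 + ε) h →
        IntegrableOn (fun p : ℝ × ℝ => Rintegrand α γ h p.1 p.2)
          ((Ioc (0 : ℝ) 1) ×ˢ (Icc (-(1 : ℝ) / 2) (1 / 2))) volume ∧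
        |Rval α γ h| ≤ C * H1Norm (1 / 2 + ε) h := by
  intro ε hε
  obtain ⟨C, hR⟩ := exists_abs_Rval_le_mul_of_norm_deriv_le hα hγ hinj harc
  obtain ⟨S, hsup⟩ := exists_norm_deriv_le_mul_H1Norm n (lt_add_of_pos_right (1 / 2) hε)
  refine ⟨C * S, fun h hh => ?_⟩
  rw [mul_assoc]
  exact hR h hh.2.1 _ (hsup h hh)

/-- For an injective arc-length curve `γ ∈ H^{(α+1)/2,2}` and every `ε > 0`,
`h ↦ R(γ,h)` is a bounded linear functional on `H^{3/2+ε,2}`. -/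
theorem statement12 {n : ℕ} (hn : 2 ≤ n) {α : ℝ} (hα : α ∈ Ioo (2:ℝ) 3)
    {γ : ℝ → Rn n} (hγ : MemH1 ((α - 1) / 2) γ) (hinj : PerInjective γ)
    (harc : ArcLengthParam γ) :
    ∀ ε > (0:ℝ), ∃ C : ℝ,
      ∀ h : ℝ → Rn n, MemH1 (1/2 + ε) h →
        IntegrableOn (fun p : ℝ × ℝ => Rintegrand α γ h p.1 p.2)
          ((Ioc (0:ℝ) 1) ×ˢ (Icc (-(1:ℝ)/2) (1/2))) volume ∧
        |Rval α γ h| ≤ C * H1Norm (1/2 + ε) h :=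
  statement12_general (one_le_two.trans hα.1.le) hγ hinj harc

end
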